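/- Let I ⊆ ℝ be a Borel set, and regard L²(I) as the closed subspace χ_I(M)L²(ℝ) of L²(ℝ). Let E be a positive operator measure on the Borel sets of ℝ with values in the bounded operators on L²(I) satisfying the covariance condition e^{-iaM} E(B) e^{iaM} = E(B+a) for all Borel B ⊆ ℝ and all a ∈ ℝ, where e^{-iaM} denotes multiplication by x ↦ e^{-iax}. Let g : ℝ → ℂ be measurable and admit an extension g̃ : {ω ∈ ℂ : Im ω ≥ 0} → ℂ such that g̃ is analytic on {Im ω > 0}, |g̃(ω)| ≤ 1 for all ω with Im ω ≥ 0, and lim_{b→0+} g̃(a+ib) = g(a) for almost all a ∈ ℝ. Then for every a ∈ ℝ, g(M)* E([a,∞)) g(M) ≤ E([a,∞)) as operators on L²(I), where g(M) denotes multiplication by g|_I. -/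

import Mathlib

open MeasureTheory Complex Filter Set
open scoped ENNReal NNReal

noncomputable section

/-- `L²(ℝ)` with respect to Lebesgue measure. -/
abbrev H2 : Type := Lp ℂ 2 (volume : Measure ℝ)

/-- `𝓕` is the Fourier–Plancherel operator: a unitary on `L²(ℝ)` which is given on
`L¹ ∩ L²` by the usual integral formula `(𝓕φ)(y) = (2π)^{-1/2} ∫ e^{-iyx} φ(x) dx`, and whose
inverse `𝓕* = 𝓕⁻¹` is given on `L¹ ∩ L²` by `(𝓕*φ)(y) = (2π)^{-1/2} ∫ e^{iyx} φ(x) dx`. -/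
def IsFourier (𝓕 : H2 ≃ₗᵢ[ℂ] H2) : Prop :=
  (∀ φ : H2, Integrable (⇑φ) volume →
      (⇑(𝓕 φ) : ℝ → ℂ) =ᵐ[volume]
        fun y : ℝ => (Real.sqrt (2 * Real.pi) : ℂ)⁻¹ *
          ∫ x : ℝ, Complex.exp (-(Complex.I * y * x)) * φ x) ∧
  (∀ φ : H2, Integrable (⇑φ) volume →
      (⇑(𝓕.symm φ) : ℝ → ℂ) =ᵐ[volume]
        fun y : ℝ => (Real.sqrt (2 * Real.pi) : ℂ)⁻¹ *
          ∫ x : ℝ, Complex.exp (Complex.I * y * x) * φ x)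

/-- The multiplication operator `g(M)` on `L²`: `φ ↦ g·φ` (pointwise product), defined
whenever the product is again in `L²`. -/
def mulLp {μ : Measure ℝ} (g : ℝ → ℂ) (φ : Lp ℂ 2 μ) : Lp ℂ 2 μ := by
  classical exact if h : MemLp (fun x => g x * φ x) 2 μ then h.toLp _ else 0

/-- `gt` is an extension of `g : ℝ → ℂ` to the closed upper half-plane which is analytic on the
open upper half-plane, bounded by one there, and has non-tangential boundary values `g` a.e. -/
structure HardyExt (g : ℝ → ℂ) (gt : ℂ → ℂ) : Prop where
  agree : ∀ a : ℝ, gt (a : ℂ) = g a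
  analytic : DifferentiableOn ℂ gt {ω : ℂ | 0 < ω.im}
  bounded : ∀ ω : ℂ, 0 ≤ ω.im → ‖gt ω‖ ≤ 1
  boundary : ∀ᵐ a : ℝ ∂volume,
    Tendsto (fun b : ℝ => gt ((a : ℂ) + b * Complex.I)) (nhdsWithin 0 (Ioi 0)) (nhds (g a))

/-- A positive operator measure (POM) on the Borel sets of `ℝ` with values in the bounded
operators on a Hilbert space `K`: `0 ≤ E(B) ≤ I`, `E(∅) = 0`, and `E` is σ-additive in the
strong operator topology. -/
structure POM (K : Type) [NormedAddCommGroup K] [InnerProductSpace ℂ K] [CompleteSpace K] where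
  toFun : Set ℝ → K →L[ℂ] K
  pos : ∀ B : Set ℝ, (toFun B).IsPositive
  le_one : ∀ B : Set ℝ, (ContinuousLinearMap.id ℂ K - toFun B).IsPositive
  empty : toFun ∅ = 0
  sigma_additive : ∀ f : ℕ → Set ℝ, (∀ n, MeasurableSet (f n)) →
    Pairwise (Function.onFun Disjoint f) →
    ∀ φ : K, HasSum (fun n => toFun (f n) φ) (toFun (⋃ n, f n) φ)

/-!
Call a bounded function `u` *form contractive* for a positive operator `T` on `L²(μ)` if
`u(M)* T u(M) ≤ T`. Covariance and positivity of `E` say that `x ↦ e^{itx}` is form contractive for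
`E([a,∞))` when `t ≥ 0`, since `e^{-itM} E([a,∞)) e^{itM} = E([a+t,∞))`.

Form contractive functions satisfy von Neumann's inequality: if `u` is one with `|u| < 1`, so is
`f ∘ u` for every analytic `f` from the unit disc to the closed unit disc. Indeed the form
contractive functions are stable under products, bounded limits and Möbius transformations of the
disc, and the Schur algorithm builds approximants of `f` from these operations.

Finally, fix `b > 0` and let `t → 0+`. The function `x ↦ e^{it(x+ib)}` is form contractive of
modulus less than one, and `z ↦ (2/t) i(1-z)/(1+z)` maps the disc to the upper half-plane and
`e^{itw}` to `(2/t) tan(tw/2)`, which tends to `w`. So `x ↦ g̃(x+ib)` is form contractive, and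
letting `b → 0+` gives the theorem.
-/

open Metric Asymptotics
open scoped Topology ComplexConjugate

section Mobius

/-- The disc automorphism `w ↦ (w + γ) / (1 + γ̄ w)`, for `|γ| < 1`, taking `0` to `γ`. -/
def mobius (γ w : ℂ) : ℂ := (w + γ) / (1 + conj γ * w)

variable {γ w : ℂ}

lemma one_sub_norm_le_norm_one_add_conj_mul (hw : ‖w‖ ≤ 1) : 1 - ‖γ‖ ≤ ‖1 + conj γ * w‖ := by
  have hγw : ‖conj γ * w‖ ≤ ‖γ‖ := by
    rw [norm_mul, RCLike.norm_conj]
    exact mul_le_of_le_one_right (norm_nonneg γ) hw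
  have htriangle := norm_sub_le_norm_add (1 : ℂ) (conj γ * w)
  rw [norm_one] at htriangle
  linarith

lemma one_add_conj_mul_ne_zero (hγ : ‖γ‖ < 1) (hw : ‖w‖ ≤ 1) : 1 + conj γ * w ≠ 0 :=
  norm_pos_iff.1 <| (sub_pos.2 hγ).trans_le (one_sub_norm_le_norm_one_add_conj_mul hw)

lemma norm_one_add_conj_mul_sq_sub_norm_add_sq (γ w : ℂ) :
    ‖1 + conj γ * w‖ ^ 2 - ‖w + γ‖ ^ 2 = (1 - ‖γ‖ ^ 2) * (1 - ‖w‖ ^ 2) := by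
  simp only [← normSq_eq_norm_sq, normSq_apply, add_re, add_im, mul_re, mul_im, conj_re, conj_im,
    one_re, one_im]
  ring

lemma norm_mobius_le_one (hγ : ‖γ‖ < 1) (hw : ‖w‖ ≤ 1) : ‖mobius γ w‖ ≤ 1 := by
  rw [mobius, norm_div, div_le_one (norm_pos_iff.2 (one_add_conj_mul_ne_zero hγ hw))]
  refine le_of_sq_le_sq (sub_nonneg.1 ?_) (norm_nonneg _)
  rw [norm_one_add_conj_mul_sq_sub_norm_add_sq]
  exact mul_nonneg (sub_nonneg.2 (pow_le_one₀ (norm_nonneg γ) hγ.le))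
    (sub_nonneg.2 (pow_le_one₀ (norm_nonneg w) hw))

lemma mobius_neg_self (γ : ℂ) : mobius (-γ) γ = 0 := by simp [mobius]

lemma mobius_mobius_neg (hγ : ‖γ‖ < 1) (hw : ‖w‖ ≤ 1) : mobius γ (mobius (-γ) w) = w := by
  have hγ' : ‖-γ‖ < 1 := by rwa [norm_neg]
  have hinner := one_add_conj_mul_ne_zero hγ' hw
  have houter := one_add_conj_mul_ne_zero hγ (norm_mobius_le_one hγ' hw)
  have hdef : mobius (-γ) w * (1 + conj (-γ) * w) = w + -γ := div_mul_cancel₀ _ hinner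
  rw [map_neg] at hdef
  rw [mobius, div_eq_iff houter]
  linear_combination hdef

lemma measurable_mobius (γ : ℂ) : Measurable (mobius γ) := by
  unfold mobius
  fun_prop

lemma differentiableOn_mobius_comp {f : ℂ → ℂ} {s : Set ℂ} (hγ : ‖γ‖ < 1)
    (hf : DifferentiableOn ℂ f s) (hmaps : ∀ z ∈ s, ‖f z‖ ≤ 1) :
    DifferentiableOn ℂ (fun z => mobius γ (f z)) s :=
  (hf.add_const _).div ((hf.const_mul _).const_add _) fun z hz =>
    one_add_conj_mul_ne_zero hγ (hmaps z hz)

lemma norm_mobius_sub_mobius_le {v : ℂ} (hγ : ‖γ‖ < 1) (hv : ‖v‖ ≤ 1) (hw : ‖w‖ ≤ 1) :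
    ‖mobius γ v - mobius γ w‖ ≤ ‖1 - γ * conj γ‖ / (1 - ‖γ‖) ^ 2 * ‖v - w‖ := by
  have hv0 := one_add_conj_mul_ne_zero hγ hv
  have hw0 := one_add_conj_mul_ne_zero hγ hw
  have hdiff : mobius γ v - mobius γ w =
      (1 - γ * conj γ) * (v - w) / ((1 + conj γ * v) * (1 + conj γ * w)) := by
    rw [mobius, mobius, div_sub_div _ _ hv0 hw0]
    ring
  have hden : (1 - ‖γ‖) ^ 2 ≤ ‖(1 + conj γ * v) * (1 + conj γ * w)‖ := by
    rw [sq, norm_mul]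
    exact mul_le_mul (one_sub_norm_le_norm_one_add_conj_mul hv)
      (one_sub_norm_le_norm_one_add_conj_mul hw) (sub_pos.2 hγ).le (norm_nonneg _)
  rw [hdiff, norm_div, norm_mul, div_mul_eq_mul_div]
  exact div_le_div_of_nonneg_left (by positivity) (pow_pos (sub_pos.2 hγ) 2) hden

end Mobius

section Schur

/-- The Schur class: analytic functions from the open unit disc to the closed unit disc. -/
structure IsSchur (f : ℂ → ℂ) : Prop where
  differentiableOn : DifferentiableOn ℂ f (ball 0 1)
  norm_le_one : ∀ z ∈ ball (0 : ℂ) 1, ‖f z‖ ≤ 1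

/-- Schur functions with finitely many Schur parameters: those obtained from a constant by
finitely many inverse steps `F ↦ (z ↦ (z F z + γ) / (1 + γ̄ z F z))` of the Schur algorithm. -/
inductive HasFiniteSchurParameters : (ℂ → ℂ) → Prop
  | const {c : ℂ} (hc : ‖c‖ ≤ 1) : HasFiniteSchurParameters fun _ => c
  | step {γ : ℂ} (hγ : ‖γ‖ < 1) {F : ℂ → ℂ} (hF : HasFiniteSchurParameters F) :
      HasFiniteSchurParameters fun z => mobius γ (z * F z)

variable {f : ℂ → ℂ}

lemma IsSchur.id_mul (hf : IsSchur f) : IsSchur fun z => z * f z where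
  differentiableOn := differentiableOn_id.mul hf.differentiableOn
  norm_le_one z hz := by
    rw [norm_mul]
    exact mul_le_one₀ (mem_ball_zero_iff.1 hz).le (norm_nonneg _) (hf.norm_le_one z hz)

lemma IsSchur.mobius_comp (hf : IsSchur f) {γ : ℂ} (hγ : ‖γ‖ < 1) :
    IsSchur fun z => mobius γ (f z) where
  differentiableOn := differentiableOn_mobius_comp hγ hf.differentiableOn hf.norm_le_one
  norm_le_one z hz := norm_mobius_le_one hγ (hf.norm_le_one z hz)

lemma HasFiniteSchurParameters.isSchur (hf : HasFiniteSchurParameters f) : IsSchur f := by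
  induction hf with
  | const hc => exact ⟨differentiableOn_const _, fun _ _ => hc⟩
  | step hγ _ ih => exact ih.id_mul.mobius_comp hγ

lemma IsSchur.exists_eqOn_mobius (hf : IsSchur f) (hf0 : ‖f 0‖ < 1) :
    ∃ f₁, IsSchur f₁ ∧ EqOn f (fun z => mobius (f 0) (z * f₁ z)) (ball 0 1) := by
  set h : ℂ → ℂ := fun z => mobius (-f 0) (f z)
  have hh : IsSchur h := hf.mobius_comp (by rwa [norm_neg])
  have hh0 : h 0 = 0 := mobius_neg_self (f 0)
  have hmaps : MapsTo h (ball 0 1) (closedBall (h 0) 1) := fun z hz => by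
    rw [hh0, mem_closedBall_zero_iff]
    exact hh.norm_le_one z hz
  refine ⟨dslope h 0, ⟨?_, fun z hz => ?_⟩, fun z hz => ?_⟩
  · exact (differentiableOn_dslope (ball_mem_nhds _ one_pos)).2 hh.differentiableOn
  · simpa using norm_dslope_le_div_of_mapsTo_ball hh.differentiableOn hmaps hz
  · have hfactor : z * dslope h 0 z = h z := by simpa [hh0] using sub_smul_dslope h 0 z
    simp only [hfactor]
    exact (mobius_mobius_neg hf0 (hf.norm_le_one z hz)).symm

lemma IsSchur.eqOn_const (hf : IsSchur f) (hf0 : ‖f 0‖ = 1) :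
    EqOn f (fun _ => f 0) (ball 0 1) :=
  eqOn_of_isPreconnected_of_isMaxOn_norm (convex_ball (0 : ℂ) 1).isPreconnected isOpen_ball
    hf.differentiableOn (mem_ball_self one_pos) fun z hz => by
      simpa [hf0] using hf.norm_le_one z hz

lemma IsSchur.exists_isBigO_pow (hf : IsSchur f) (n : ℕ) :
    ∃ F, HasFiniteSchurParameters F ∧ (fun z => f z - F z) =O[𝓝 0] fun z => z ^ n := by
  have hball : ball (0 : ℂ) 1 ∈ 𝓝 0 := ball_mem_nhds _ one_pos
  induction n generalizing f with
  | zero =>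
    refine ⟨fun _ => 0, .const (by simp), ?_⟩
    simpa using (hf.differentiableOn.continuousOn.continuousAt hball).norm.isBoundedUnder_le
  | succ n ih =>
    rcases (hf.norm_le_one 0 (mem_ball_self one_pos)).lt_or_eq with hf0 | hf0
    · obtain ⟨f₁, hf₁, heq⟩ := hf.exists_eqOn_mobius hf0
      obtain ⟨F, hF, hFO⟩ := ih hf₁
      refine ⟨_, .step hf0 hF, ?_⟩
      have hlip : (fun z => f z - mobius (f 0) (z * F z)) =O[𝓝 0]
          fun z => z * f₁ z - z * F z := by
        refine .of_bound (‖1 - f 0 * conj (f 0)‖ / (1 - ‖f 0‖) ^ 2) ?_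
        filter_upwards [hball] with z hz
        rw [heq hz]
        exact norm_mobius_sub_mobius_le hf0 (hf₁.id_mul.norm_le_one z hz)
          (hF.isSchur.id_mul.norm_le_one z hz)
      refine hlip.trans ?_
      simpa only [← mul_sub, pow_succ'] using (isBigO_refl (fun z : ℂ => z) (𝓝 0)).mul hFO
    · refine ⟨_, .const hf0.le, EventuallyEq.trans_isBigO ?_ (isBigO_zero _ _)⟩
      filter_upwards [hball] with z hz
      rw [hf.eqOn_const hf0 hz, sub_self]

lemma norm_le_mul_pow_of_isBigO_pow {h : ℂ → ℂ} {C : ℝ} {n : ℕ} {z : ℂ}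
    (hd : DifferentiableOn ℂ h (ball 0 1)) (hC : ∀ w ∈ ball (0 : ℂ) 1, ‖h w‖ ≤ C)
    (hO : h =O[𝓝 0] fun w => w ^ (n + 1)) (hz : z ∈ ball (0 : ℂ) 1) :
    ‖h z‖ ≤ C * ‖z‖ ^ (n + 1) := by
  have hh0 : h 0 = 0 := by
    refine IsBigO.eq_zero_of_norm_pow (n := n + 1) ?_ n.succ_ne_zero
    simpa only [sub_zero, ← norm_pow] using hO.norm_right
  have ho : (fun w => h w - h 0) =o[𝓝 0] fun w => ‖w - 0‖ ^ n := by
    simpa only [hh0, sub_zero, ← norm_pow] using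
      (hO.trans_isLittleO (isLittleO_pow_pow n.lt_succ_self)).norm_right
  have hmaps : MapsTo h (ball 0 1) (closedBall (h 0) C) := fun w hw => by
    rw [hh0, mem_closedBall_zero_iff]
    exact hC w hw
  simpa [hh0] using dist_le_mul_div_pow_of_mapsTo_ball_of_isLittleO hd hmaps ho hz

theorem IsSchur.exists_seq_tendsto (hf : IsSchur f) :
    ∃ F : ℕ → ℂ → ℂ, (∀ n, HasFiniteSchurParameters (F n)) ∧
      ∀ z ∈ ball (0 : ℂ) 1, Tendsto (fun n => F n z) atTop (𝓝 (f z)) := by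
  choose F hF hFO using fun n : ℕ => hf.exists_isBigO_pow (n + 1)
  refine ⟨F, hF, fun z hz => ?_⟩
  have hbound (n : ℕ) : ‖F n z - f z‖ ≤ 2 * ‖z‖ ^ (n + 1) := by
    rw [norm_sub_rev]
    refine norm_le_mul_pow_of_isBigO_pow
      (hf.differentiableOn.sub (hF n).isSchur.differentiableOn) (fun w hw => ?_) (hFO n) hz
    have hfw := hf.norm_le_one w hw
    have hFw := (hF n).isSchur.norm_le_one w hw
    exact (norm_sub_le _ _).trans (by linarith)
  have hpow : Tendsto (fun n : ℕ => 2 * ‖z‖ ^ (n + 1)) atTop (𝓝 0) := by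
    simpa using ((tendsto_pow_atTop_nhds_zero_of_lt_one (norm_nonneg z)
      (mem_ball_zero_iff.1 hz)).comp (tendsto_add_atTop_nat 1)).const_mul 2
  exact tendsto_iff_norm_sub_tendsto_zero.2 (squeeze_zero (fun _ => norm_nonneg _) hbound hpow)

end Schur

section Multiplication

variable {μ : Measure ℝ} {u v : ℝ → ℂ}

lemma coeFn_mulLp (hu : MemLp u ∞ μ) (φ : Lp ℂ 2 μ) : mulLp u φ =ᵐ[μ] fun x => u x * φ x := by
  have hmem : MemLp (fun x => u x * φ x) 2 μ := (Lp.memLp φ).mul hu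
  rw [mulLp, dif_pos hmem]
  exact hmem.coeFn_toLp

lemma mulLp_mulLp (hu : MemLp u ∞ μ) (hv : MemLp v ∞ μ) (φ : Lp ℂ 2 μ) :
    mulLp u (mulLp v φ) = mulLp (fun x => u x * v x) φ := by
  apply Lp.ext
  filter_upwards [coeFn_mulLp hu (mulLp v φ), coeFn_mulLp hv φ,
    coeFn_mulLp (u := fun x => u x * v x) (hv.mul hu) φ] with x huvφ hvφ hmul
  rw [huvφ, hvφ, hmul, mul_assoc]

lemma mulLp_sub (hu : MemLp u ∞ μ) (hv : MemLp v ∞ μ) (φ : Lp ℂ 2 μ) :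
    mulLp (fun x => u x - v x) φ = mulLp u φ - mulLp v φ := by
  apply Lp.ext
  filter_upwards [coeFn_mulLp hu φ, coeFn_mulLp hv φ,
    coeFn_mulLp (u := fun x => u x - v x) (hu.sub hv) φ,
    Lp.coeFn_sub (mulLp u φ) (mulLp v φ)] with x huφ hvφ hsub hcoe
  rw [hsub, hcoe, Pi.sub_apply, huφ, hvφ, sub_mul]

lemma mulLp_const (c : ℂ) (φ : Lp ℂ 2 μ) : mulLp (fun _ => c) φ = c • φ := by
  apply Lp.ext
  filter_upwards [coeFn_mulLp (memLp_top_const c) φ, Lp.coeFn_smul c φ] with x hmul hsmul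
  rw [hmul, hsmul, Pi.smul_apply, smul_eq_mul]

lemma inner_mulLp_left (hu : MemLp u ∞ μ) (φ ψ : Lp ℂ 2 μ) :
    inner ℂ (mulLp u φ) ψ = inner ℂ φ (mulLp (fun x => conj (u x)) ψ) := by
  rw [L2.inner_def, L2.inner_def]
  apply integral_congr_ae
  filter_upwards [coeFn_mulLp hu φ, coeFn_mulLp (u := fun x => conj (u x)) hu.star ψ]
    with x huφ huψ
  rw [huφ, huψ]
  simp only [RCLike.inner_apply, map_mul]
  ring

lemma norm_mulLp_sq (hu : MemLp u ∞ μ) (φ : Lp ℂ 2 μ) :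
    ‖mulLp u φ‖ ^ 2 = ∫ x, ‖u x * φ x‖ ^ 2 ∂μ := by
  rw [← inner_self_eq_norm_sq (𝕜 := ℂ), L2.inner_def, ← integral_re (L2.integrable_inner _ _)]
  apply integral_congr_ae
  filter_upwards [coeFn_mulLp hu φ] with x huφ
  rw [huφ, inner_self_eq_norm_sq (𝕜 := ℂ)]

lemma tendsto_mulLp {u : ℕ → ℝ → ℂ} {C : ℝ} (hu : ∀ n, AEStronglyMeasurable (u n) μ)
    (hC : ∀ n, ∀ᵐ x ∂μ, ‖u n x‖ ≤ C)
    (hlim : ∀ᵐ x ∂μ, Tendsto (fun n => u n x) atTop (𝓝 (v x))) (φ : Lp ℂ 2 μ) :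
    Tendsto (fun n => mulLp (u n) φ) atTop (𝓝 (mulLp v φ)) := by
  have hv : AEStronglyMeasurable v μ := aestronglyMeasurable_of_tendsto_ae atTop hu hlim
  have hvC : ∀ᵐ x ∂μ, ‖v x‖ ≤ C := by
    filter_upwards [hlim, ae_all_iff.2 hC] with x hx hCx
    exact le_of_tendsto hx.norm (.of_forall hCx)
  have hu' (n : ℕ) : MemLp (u n) ∞ μ := memLp_top_of_bound (hu n) C (hC n)
  have hv' : MemLp v ∞ μ := memLp_top_of_bound hv C hvC
  have hnorm (n : ℕ) : ‖mulLp (u n) φ - mulLp v φ‖ ^ 2 = ∫ x, ‖(u n x - v x) * φ x‖ ^ 2 ∂μ := by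
    rw [← mulLp_sub (hu' n) hv']
    exact norm_mulLp_sq ((hu' n).sub hv') φ
  have hsq : Tendsto (fun n => ‖mulLp (u n) φ - mulLp v φ‖ ^ 2) atTop (𝓝 0) := by
    simp only [hnorm]
    rw [← integral_zero ℝ ℝ (μ := μ)]
    refine tendsto_integral_of_dominated_convergence (fun x => (2 * C) ^ 2 * ‖φ x‖ ^ 2)
      (fun n => (((hu n).sub hv).mul (Lp.aestronglyMeasurable φ)).norm.pow 2)
      ((Lp.memLp φ).integrable_norm_pow two_ne_zero |>.const_mul _) (fun n => ?_) ?_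
    · filter_upwards [hC n, hvC] with x hux hvx
      rw [norm_mul, mul_pow, Real.norm_of_nonneg (by positivity)]
      gcongr
      exact (norm_sub_le _ _).trans (by linarith)
    · filter_upwards [hlim] with x hx
      simpa using (((hx.sub_const (v x)).mul_const (φ x)).norm).pow 2
  rw [tendsto_iff_norm_sub_tendsto_zero]
  simpa [Real.sqrt_sq] using hsq.sqrt

end Multiplication

section FormContractive

variable {μ : Measure ℝ} {T : Lp ℂ 2 μ →L[ℂ] Lp ℂ 2 μ} {u v : ℝ → ℂ}

/-- `u(M)* T u(M) ≤ T` on `L²(μ)`, for a measurable function `u` with `|u| ≤ 1`. -/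
structure IsFormContractive (T : Lp ℂ 2 μ →L[ℂ] Lp ℂ 2 μ) (u : ℝ → ℂ) : Prop where
  aestronglyMeasurable : AEStronglyMeasurable u μ
  norm_le_one : ∀ᵐ x ∂μ, ‖u x‖ ≤ 1
  re_inner_le : ∀ φ : Lp ℂ 2 μ,
    (inner ℂ (mulLp u φ) (T (mulLp u φ)) : ℂ).re ≤ (inner ℂ φ (T φ) : ℂ).re

namespace IsFormContractive

lemma memLp_top (hu : IsFormContractive T u) : MemLp u ∞ μ :=
  memLp_top_of_bound hu.aestronglyMeasurable 1 hu.norm_le_one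

lemma const (hT : T.IsPositive) {c : ℂ} (hc : ‖c‖ ≤ 1) : IsFormContractive T fun _ => c where
  aestronglyMeasurable := aestronglyMeasurable_const
  norm_le_one := .of_forall fun _ => hc
  re_inner_le φ := by
    rw [mulLp_const, map_smul, inner_smul_left, inner_smul_right, ← mul_assoc, conj_mul',
      ← ofReal_pow, re_ofReal_mul]
    exact mul_le_of_le_one_left (hT.re_inner_nonneg_right φ) (pow_le_one₀ (norm_nonneg c) hc)

lemma mul (hu : IsFormContractive T u) (hv : IsFormContractive T v) :
    IsFormContractive T fun x => u x * v x where
  aestronglyMeasurable := hu.aestronglyMeasurable.mul hv.aestronglyMeasurable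
  norm_le_one := by
    filter_upwards [hu.norm_le_one, hv.norm_le_one] with x hux hvx
    rw [norm_mul]
    exact mul_le_one₀ hux (norm_nonneg _) hvx
  re_inner_le φ := by
    rw [← mulLp_mulLp hu.memLp_top hv.memLp_top]
    exact (hu.re_inner_le _).trans (hv.re_inner_le φ)

lemma of_tendsto_ae {ι : Type*} {l : Filter ι} [l.NeBot] [l.IsCountablyGenerated]
    {u : ι → ℝ → ℂ} (hu : ∀ᶠ i in l, IsFormContractive T (u i))
    (hlim : ∀ᵐ x ∂μ, Tendsto (fun i => u i x) l (𝓝 (v x))) : IsFormContractive T v := by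
  obtain ⟨s, hs, hus⟩ := exists_seq_forall_of_frequently hu.frequently
  have hlim_seq : ∀ᵐ x ∂μ, Tendsto (fun n => u (s n) x) atTop (𝓝 (v x)) := by
    filter_upwards [hlim] with x hx using hx.comp hs
  refine ⟨aestronglyMeasurable_of_tendsto_ae atTop (fun n => (hus n).aestronglyMeasurable) hlim_seq,
    ?_, fun φ => ?_⟩
  · filter_upwards [hlim_seq, ae_all_iff.2 fun n => (hus n).norm_le_one] with x hx hux
    exact le_of_tendsto hx.norm (.of_forall hux)
  · have hmul := tendsto_mulLp (fun n => (hus n).aestronglyMeasurable)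
      (fun n => (hus n).norm_le_one) hlim_seq φ
    have hform := (continuous_re.tendsto _).comp
      (hmul.inner (𝕜 := ℂ) ((T.continuous.tendsto _).comp hmul))
    exact le_of_tendsto hform (.of_forall fun n => (hus n).re_inner_le φ)

end IsFormContractive

-- The difference of the two sides is `(1 - |γ|²) (⟨χ, Tχ⟩ - ⟨η, Tη⟩)`.
lemma re_inner_smul_add_le {K : Type*} [NormedAddCommGroup K] [InnerProductSpace ℂ K]
    (T : K →L[ℂ] K) {γ : ℂ} (hγ : ‖γ‖ ≤ 1) {χ η : K}
    (hle : (inner ℂ η (T η) : ℂ).re ≤ (inner ℂ χ (T χ) : ℂ).re) :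
    (inner ℂ (γ • χ + η) (T (γ • χ + η)) : ℂ).re ≤
      (inner ℂ (χ + conj γ • η) (T (χ + conj γ • η)) : ℂ).re := by
  have hdiff : inner ℂ (χ + conj γ • η) (T (χ + conj γ • η)) - inner ℂ (γ • χ + η) (T (γ • χ + η))
      = ((1 - ‖γ‖ ^ 2 : ℝ) : ℂ) * (inner ℂ χ (T χ) - inner ℂ η (T η)) := by
    push_cast
    rw [← conj_mul']
    simp only [map_add, map_smul, inner_add_left, inner_add_right, inner_smul_left,
      inner_smul_right, conj_conj]
    ring
  rw [← sub_nonneg, ← sub_re, hdiff, re_ofReal_mul, sub_re]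
  exact mul_nonneg (sub_nonneg.2 (pow_le_one₀ (norm_nonneg γ) hγ)) (sub_nonneg.2 hle)

namespace IsFormContractive

-- With `χ = (1 + γ̄ u)⁻¹ φ`, one has `φ = χ + γ̄ u χ` and `mobius γ u φ = γ χ + u χ`.
lemma mobius_comp (hu : IsFormContractive T u) {γ : ℂ} (hγ : ‖γ‖ < 1) :
    IsFormContractive T fun x => mobius γ (u x) := by
  have hmobius : AEStronglyMeasurable (fun x => mobius γ (u x)) μ :=
    ((measurable_mobius γ).comp_aemeasurable hu.aestronglyMeasurable.aemeasurable)
      |>.aestronglyMeasurable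
  have hmobius_le : ∀ᵐ x ∂μ, ‖mobius γ (u x)‖ ≤ 1 := by
    filter_upwards [hu.norm_le_one] with x hx using norm_mobius_le_one hγ hx
  have hinv : MemLp (fun x => (1 + conj γ * u x)⁻¹) ∞ μ := by
    refine memLp_top_of_bound (C := (1 - ‖γ‖)⁻¹)
      (by have := hu.aestronglyMeasurable.aemeasurable; fun_prop) ?_
    filter_upwards [hu.norm_le_one] with x hx
    rw [norm_inv]
    exact inv_anti₀ (sub_pos.2 hγ) (one_sub_norm_le_norm_one_add_conj_mul hx)
  refine ⟨hmobius, hmobius_le, fun φ => ?_⟩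
  set χ := mulLp (fun x => (1 + conj γ * u x)⁻¹) φ
  have hχ : χ =ᵐ[μ] fun x => (1 + conj γ * u x)⁻¹ * φ x := coeFn_mulLp hinv φ
  have hφ_eq : φ = χ + conj γ • mulLp u χ := by
    apply Lp.ext
    filter_upwards [hχ, coeFn_mulLp hu.memLp_top χ, Lp.coeFn_add χ (conj γ • mulLp u χ),
      Lp.coeFn_smul (conj γ) (mulLp u χ), hu.norm_le_one] with x hχx huχ hadd hsmul hux
    have hne := one_add_conj_mul_ne_zero hγ hux
    rw [hadd, Pi.add_apply, hsmul, Pi.smul_apply, huχ, hχx, smul_eq_mul]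
    field_simp
  have hmobius_eq : mulLp (fun x => mobius γ (u x)) φ = γ • χ + mulLp u χ := by
    apply Lp.ext
    filter_upwards [hχ, coeFn_mulLp hu.memLp_top χ, Lp.coeFn_add (γ • χ) (mulLp u χ),
      Lp.coeFn_smul γ χ, coeFn_mulLp (memLp_top_of_bound hmobius 1 hmobius_le) φ]
      with x hχx huχ hadd hsmul hmul
    rw [hmul, hadd, Pi.add_apply, hsmul, Pi.smul_apply, huχ, hχx, smul_eq_mul, mobius]
    ring
  rw [hmobius_eq]
  conv_rhs => rw [hφ_eq]
  exact re_inner_smul_add_le T hγ.le (hu.re_inner_le χ)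

lemma comp_of_hasFiniteSchurParameters (hT : T.IsPositive) (hu : IsFormContractive T u)
    {F : ℂ → ℂ} (hF : HasFiniteSchurParameters F) : IsFormContractive T fun x => F (u x) := by
  induction hF with
  | const hc => exact const hT hc
  | step hγ _ ih => exact (hu.mul ih).mobius_comp hγ

theorem comp_of_isSchur (hT : T.IsPositive) (hu : IsFormContractive T u)
    (hu1 : ∀ᵐ x ∂μ, ‖u x‖ < 1) {f : ℂ → ℂ} (hf : IsSchur f) :
    IsFormContractive T fun x => f (u x) := by
  obtain ⟨F, hF, hlim⟩ := hf.exists_seq_tendsto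
  refine of_tendsto_ae (l := atTop) (u := fun n x => F n (u x))
    (.of_forall fun n => hu.comp_of_hasFiniteSchurParameters hT (hF n)) ?_
  filter_upwards [hu1] with x hx using hlim _ (mem_ball_zero_iff.2 hx)

end IsFormContractive

end FormContractive

section HalfPlane

/-- The Cayley transform of the unit disc onto the upper half-plane with `e^{iθ} ↦ tan (θ/2)`. -/
def cayley (z : ℂ) : ℂ := I * ((1 - z) / (1 + z))

lemma one_add_ne_zero_of_mem_ball {z : ℂ} (hz : z ∈ ball (0 : ℂ) 1) : 1 + z ≠ 0 :=
  UnitDisc.one_add_coe_ne_zero (.mk z (mem_ball_zero_iff.1 hz))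

lemma differentiableOn_cayley : DifferentiableOn ℂ cayley (ball 0 1) :=
  ((differentiableOn_id.const_sub 1).div (differentiableOn_id.const_add 1) fun _ hz =>
    one_add_ne_zero_of_mem_ball hz).const_mul _

lemma cayley_im_pos {z : ℂ} (hz : z ∈ ball (0 : ℂ) 1) : 0 < (cayley z).im := by
  have hnormSq : normSq z < 1 := by
    rw [normSq_eq_norm_sq]
    exact pow_lt_one₀ (norm_nonneg z) (mem_ball_zero_iff.1 hz) two_ne_zero
  rw [normSq_apply] at hnormSq
  rw [cayley, I_mul_im, div_re, ← add_div]
  refine div_pos ?_ (normSq_pos.2 (one_add_ne_zero_of_mem_ball hz))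
  simp only [sub_re, one_re, add_re, sub_im, one_im, add_im]
  linarith

lemma tendsto_cayley_exp (w : ℂ) :
    Tendsto (fun t : ℝ => ((2 / t : ℝ) : ℂ) * cayley (exp (I * t * w))) (𝓝[>] 0) (𝓝 w) := by
  have hexp : HasDerivAt (fun t : ℝ => exp (I * t * w)) (I * w) 0 := by
    simpa using (((hasDerivAt_id (0 : ℝ)).ofReal_comp.const_mul I).mul_const w).cexp
  have hcayley : HasDerivAt (fun t : ℝ => cayley (exp (I * t * w))) (w / 2) 0 := by
    refine (((hexp.const_sub 1).div (hexp.const_add 1) (by simp)).const_mul I).congr_deriv ?_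
    simp only [ofReal_zero, mul_zero, zero_mul, exp_zero]
    linear_combination -(w / 2) * I_sq
  have hslope := (hcayley.tendsto_slope_zero_right).const_mul 2
  rw [mul_div_cancel₀ w two_ne_zero] at hslope
  refine hslope.congr fun t => ?_
  have hcayley_one : cayley 1 = 0 := by simp [cayley]
  simp only [zero_add, ofReal_zero, mul_zero, zero_mul, exp_zero, hcayley_one, sub_zero, real_smul,
    ofReal_div, ofReal_inv, ofReal_ofNat]
  ring

variable {μ : Measure ℝ} {T : Lp ℂ 2 μ →L[ℂ] Lp ℂ 2 μ} {G : ℂ → ℂ}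

lemma isSchur_comp_cayley (hG : DifferentiableOn ℂ G {ω | 0 < ω.im})
    (hG1 : ∀ ω : ℂ, 0 < ω.im → ‖G ω‖ ≤ 1) {s : ℝ} (hs : 0 < s) :
    IsSchur fun z => G (s * cayley z) := by
  have hmaps : MapsTo (fun z => (s : ℂ) * cayley z) (ball 0 1) {ω | 0 < ω.im} := fun z hz => by
    change 0 < ((s : ℂ) * cayley z).im
    rw [im_ofReal_mul]
    exact mul_pos hs (cayley_im_pos hz)
  exact ⟨hG.comp (differentiableOn_cayley.const_mul _) hmaps, fun z hz => hG1 _ (hmaps hz)⟩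

lemma norm_exp_I_mul_mul (t : ℝ) (w : ℂ) : ‖exp (I * t * w)‖ = Real.exp (-(t * w.im)) := by
  simp [norm_exp, mul_assoc]

lemma IsFormContractive.exp_I_mul_add_mul_I (hT : T.IsPositive) {t b : ℝ} (htb : 0 ≤ t * b)
    (hexp : IsFormContractive T fun x : ℝ => exp (I * t * x)) :
    IsFormContractive T fun x : ℝ => exp (I * t * (x + b * I)) := by
  have hdecay : ‖exp (I * t * (b * I))‖ ≤ 1 := by
    rw [norm_exp_I_mul_mul]
    simpa using htb
  simpa only [mul_add, exp_add] using hexp.mul (const hT hdecay)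

theorem isFormContractive_of_differentiableOn_upperHalfPlane (hT : T.IsPositive)
    (hexp : ∀ t : ℝ, 0 ≤ t → IsFormContractive T fun x : ℝ => exp (I * t * x))
    (hG : DifferentiableOn ℂ G {ω | 0 < ω.im}) (hG1 : ∀ ω : ℂ, 0 < ω.im → ‖G ω‖ ≤ 1)
    {b : ℝ} (hb : 0 < b) : IsFormContractive T fun x : ℝ => G (x + b * I) := by
  refine IsFormContractive.of_tendsto_ae (l := 𝓝[>] (0 : ℝ))
    (u := fun t x => G ((2 / t : ℝ) * cayley (exp (I * t * (x + b * I))))) ?_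
    (.of_forall fun x => ?_)
  · filter_upwards [self_mem_nhdsWithin] with t (ht : 0 < t)
    refine ((hexp t ht.le).exp_I_mul_add_mul_I hT (by positivity)).comp_of_isSchur hT
      (.of_forall fun x => ?_) (isSchur_comp_cayley hG hG1 (div_pos two_pos ht))
    rw [norm_exp_I_mul_mul]
    simpa using mul_pos ht hb
  · have hopen : IsOpen {ω : ℂ | 0 < ω.im} := isOpen_lt continuous_const continuous_im
    have hmem : (x : ℂ) + b * I ∈ {ω : ℂ | 0 < ω.im} := by simpa using hb
    exact (hG.continuousOn.continuousAt (hopen.mem_nhds hmem)).tendsto.comp (tendsto_cayley_exp _)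

end HalfPlane

section POM

lemma POM.re_inner_mono {K : Type} [NormedAddCommGroup K] [InnerProductSpace ℂ K]
    [CompleteSpace K] (E : POM K) {A B : Set ℝ} (hA : MeasurableSet A) (hB : MeasurableSet B)
    (hAB : A ⊆ B) (φ : K) :
    (inner ℂ φ (E.toFun A φ) : ℂ).re ≤ (inner ℂ φ (E.toFun B φ) : ℂ).re := by
  let S : ℕ → Set ℝ := fun n => if n = 0 then A else B
  have hS : ∀ n, MeasurableSet (S n) := fun n => by
    by_cases hn : n = 0 <;> simpa [S, hn]
  have hS_union : ⋃ n, disjointed S n = B := by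
    rw [iUnion_disjointed, ← union_iUnion_nat_succ]
    simp [S, hAB, iUnion_const]
  have hsum := ((E.sigma_additive _ (fun n => .disjointed hS n) (disjoint_disjointed S) φ).mapL
    (innerSL ℂ φ)).mapL reCLM
  rw [hS_union] at hsum
  simpa [S] using le_hasSum hsum 0 fun n _ => (E.pos _).re_inner_nonneg_right φ

variable {μ : Measure ℝ}

/-- Covariance of a positive operator measure on `L²(μ)` under translations:
`e^{-iaM} E(B) e^{iaM} = E(B + a)`. -/
def POM.IsCovariant (E : POM (Lp ℂ 2 μ)) : Prop :=
  ∀ (a : ℝ) (B : Set ℝ), MeasurableSet B → ∀ φ : Lp ℂ 2 μ,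
    mulLp (fun x => exp (-(I * a * x))) (E.toFun B (mulLp (fun x => exp (I * a * x)) φ)) =
      E.toFun ((· + a) '' B) φ

lemma POM.IsCovariant.isFormContractive_exp {E : POM (Lp ℂ 2 μ)} (hE : E.IsCovariant) (a : ℝ)
    {t : ℝ} (ht : 0 ≤ t) :
    IsFormContractive (E.toFun (Ici a)) fun x : ℝ => exp (I * t * x) := by
  have hmeas : AEStronglyMeasurable (fun x : ℝ => exp (I * t * x)) μ :=
    Continuous.aestronglyMeasurable (by fun_prop)
  have hnorm : ∀ᵐ x : ℝ ∂μ, ‖exp (I * t * x)‖ ≤ 1 :=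
    .of_forall fun x => by simp [norm_exp_I_mul_mul]
  have hconj : (fun x : ℝ => conj (exp (I * t * x))) = fun x : ℝ => exp (-(I * t * x)) := by
    funext x
    simp [← exp_conj]
  refine ⟨hmeas, hnorm, fun φ => ?_⟩
  rw [inner_mulLp_left (memLp_top_of_bound hmeas 1 hnorm), hconj, hE t _ measurableSet_Ici,
    image_add_const_Ici]
  exact E.re_inner_mono measurableSet_Ici measurableSet_Ici
    (Ici_subset_Ici.2 (le_add_of_nonneg_right ht)) φ

end POM

theorem statement5_general {μ : Measure ℝ} {E : POM (Lp ℂ 2 μ)} (hE : E.IsCovariant)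
    {g : ℝ → ℂ} {G : ℂ → ℂ} (hG : DifferentiableOn ℂ G {ω | 0 < ω.im})
    (hG1 : ∀ ω : ℂ, 0 < ω.im → ‖G ω‖ ≤ 1)
    (hlim : ∀ᵐ x : ℝ ∂μ, Tendsto (fun b : ℝ => G (x + b * I)) (𝓝[>] 0) (𝓝 (g x)))
    (a : ℝ) (φ : Lp ℂ 2 μ) :
    (inner ℂ (mulLp g φ) (E.toFun (Ici a) (mulLp g φ)) : ℂ).re ≤
      (inner ℂ φ (E.toFun (Ici a) φ) : ℂ).re := by
  have hg : IsFormContractive (E.toFun (Ici a)) g := by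
    refine .of_tendsto_ae ?_ hlim
    filter_upwards [self_mem_nhdsWithin] with b hb
    exact isFormContractive_of_differentiableOn_upperHalfPlane (E.pos _)
      (fun t ht => hE.isFormContractive_exp a ht) hG hG1 hb
  exact hg.re_inner_le φ

/-- For a covariant POM `E` on `L²(I)` and a measurable `g : ℝ → ℂ` with a
bounded analytic extension to the upper half-plane having boundary values `g` a.e., one has
`g(M)* E([a,∞)) g(M) ≤ E([a,∞))` for every `a ∈ ℝ`, i.e.
`⟨g(M)φ, E([a,∞)) g(M)φ⟩ ≤ ⟨φ, E([a,∞)) φ⟩` for all `φ ∈ L²(I)`. -/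
theorem statement5 (I : Set ℝ) (hI : MeasurableSet I)
    (E : POM (Lp ℂ 2 (volume.restrict I)))
    (hcov : ∀ (a : ℝ) (B : Set ℝ), MeasurableSet B → ∀ φ : Lp ℂ 2 (volume.restrict I),
      mulLp (fun x => Complex.exp (-(Complex.I * a * x)))
        (E.toFun B (mulLp (fun x => Complex.exp (Complex.I * a * x)) φ)) =
      E.toFun ((· + a) '' B) φ)
    (g : ℝ → ℂ) (hg : Measurable g) (gt : ℂ → ℂ) (hgt : HardyExt g gt)
    (a : ℝ) (φ : Lp ℂ 2 (volume.restrict I)) :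
    (inner ℂ (mulLp g φ) (E.toFun (Set.Ici a) (mulLp g φ)) : ℂ).re ≤
      (inner ℂ φ (E.toFun (Set.Ici a) φ) : ℂ).re := by
  exact statement5_general hcov hgt.analytic (fun ω hω => hgt.bounded ω hω.le)
    (ae_restrict_of_ae hgt.boundary) a φ
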